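/- Every contractive covariant representation (π, T) of (A, α) on H extends to a coisometric covariant representation (ρ, V) on a Hilbert space K ⊇ H: ρ(a)H ⊆ H with ρ(a)|H = π(a), VH ⊆ H with V|H = T, Vρ(α(a)) = ρ(a)V for all a ∈ A, and VV* = I. -/

import Mathlib

set_option synthInstance.maxHeartbeats 1000000
set_option maxHeartbeats 1000000

open ContinuousLinearMap

universe u v

/-!
The adjoint of `V` is the isometry of `K = H ⊕ L` with operator matrix `!![T*, 0; J D, W]`, where
`D = (1 - T T*) ^ (1 / 2)`, `L` carries a representation `σ`, and `J : H → L`, `W : L → L` are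
isometries with orthogonal ranges intertwining `π` with `σ ∘ α` and `σ` with `σ ∘ α`.

To get `L`, split `π` into cyclic pieces. Since `α` is injective, the positive functional of a
cyclic vector extends along `α` by the M. Riesz extension theorem, and the GNS representations of
the extensions give `π₁` and an isometry intertwining `π` with `π₁ ∘ α`. Iterating, `L` is the sum
of `π₁, π₂, …`, the map `J` embeds `H` in the first summand, and `W` shifts each summand into the
next.
-/

universe w

open scoped InnerProductSpace ComplexStarModule ComplexOrder NNReal ENNReal

theorem exists_nonneg_on_cone_comp_eq {E F : Type*} [AddCommGroup E] [Module ℝ E]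
    [AddCommGroup F] [Module ℝ F] (s : PointedCone ℝ F) (i : E →ₗ[ℝ] F) (φ : E →ₗ[ℝ] ℝ)
    (hφ : ∀ x, i x ∈ s → 0 ≤ φ x) (hi : ∀ y, ∃ x, i x + y ∈ s) :
    ∃ g : F →ₗ[ℝ] ℝ, (∀ x, g (i x) = φ x) ∧ ∀ y ∈ s, 0 ≤ g y := by
  have hker : LinearMap.ker i ≤ LinearMap.ker φ := fun x hx ↦ by
    have hx' : i x = 0 := hx
    have hpos : 0 ≤ φ x := hφ x (hx' ▸ s.zero_mem)
    have hneg : 0 ≤ φ (-x) := hφ (-x) (by simp [hx'])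
    rw [map_neg] at hneg
    exact le_antisymm (neg_nonneg.1 hneg) hpos
  let f : F →ₗ.[ℝ] ℝ :=
    ⟨LinearMap.range i, (LinearMap.ker i).liftQ φ hker ∘ₗ i.quotKerEquivRange.symm.toLinearMap⟩
  have hf (x : E) : f ⟨i x, LinearMap.mem_range_self i x⟩ = φ x :=
    congrArg ((LinearMap.ker i).liftQ φ hker)
      (i.quotKerEquivRange_symm_apply_image x (LinearMap.mem_range_self i x))
  obtain ⟨g, hgf, hgs⟩ := riesz_extension s f
    (by rintro ⟨_, x, rfl⟩ hx; exact (hf x).symm ▸ hφ x hx)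
    (fun y ↦ let ⟨x, hx⟩ := hi y; ⟨⟨i x, x, rfl⟩, hx⟩)
  exact ⟨g, fun x ↦ (hgf ⟨i x, x, rfl⟩).trans (hf x), hgs⟩

section Positivity

variable {A B : Type*} [CStarAlgebra A] [PartialOrder A] [StarOrderedRing A]
  [CStarAlgebra B] [PartialOrder B] [StarOrderedRing B]

theorem nonneg_of_map_nonneg (α : A →⋆ₐ[ℂ] B) (hα : Function.Injective α) {a : A}
    (ha : IsSelfAdjoint a) (h : 0 ≤ α a) : 0 ≤ a := by
  rw [StarOrderedRing.nonneg_iff_spectrum_nonneg (R := ℝ) a ha, ← ha.map_spectrum_real α hα]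
  exact fun x hx ↦ spectrum_nonneg_of_nonneg h hx

theorem exists_positiveLinearMap_re_eq (h : A →ₗ[ℝ] ℝ) (h_re : ∀ a, h (ℜ a : A) = h a)
    (h_nonneg : ∀ a, 0 ≤ a → 0 ≤ h a) : ∃ f : A →ₚ[ℂ] ℂ, ∀ a, (f a).re = h a := by
  refine ⟨.mk₀ (Module.Dual.extendRCLike (𝕜 := ℂ) h) fun a ha ↦ ?_, fun a ↦ ?_⟩
  · have him : h (Complex.I • a) = 0 := by
      rw [← h_re, realPart_I_smul, ha.isSelfAdjoint.imaginaryPart, neg_zero,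
        ZeroMemClass.coe_zero, map_zero]
    simpa [Module.Dual.extendRCLike_apply, him] using h_nonneg a ha
  · change (Module.Dual.extendRCLike (𝕜 := ℂ) h a).re = h a
    simp [Module.Dual.extendRCLike_apply]

-- M. Riesz extension for the real cone of elements with nonnegative real part, in which the range
-- of `α` is cofinal since it contains the unit.
theorem exists_positiveLinearMap_extension (α : A →⋆ₐ[ℂ] B) (hα : Function.Injective α)
    (φ : A →ₚ[ℂ] ℂ) : ∃ f : B →ₚ[ℂ] ℂ, ∀ a, f (α a) = φ a := by
  let re : B →ₗ[ℝ] B := (selfAdjoint.submodule ℝ B).subtype ∘ₗ realPart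
  have hre_sa {b : B} (hb : IsSelfAdjoint b) : re b = b := hb.coe_realPart
  have hre_map (a : A) : re (α a) = α (ℜ a : A) := (map_realPart α a).symm
  let φr : A →ₗ[ℝ] ℝ := Complex.reLm ∘ₗ φ.toLinearMap.restrictScalars ℝ
  have hφr (a : A) : φr (ℜ a : A) = φr a := by
    change (φ (ℜ a : A)).re = (φ a).re
    rw [map_realPart, Complex.coe_realPart, Complex.ofReal_re]
  have hφr_nonneg (a : A) (ha : 0 ≤ re (α a)) : 0 ≤ φr a := by
    rw [hre_map] at ha
    rw [← hφr]
    exact (Complex.le_def.1 (φ.map_nonneg (nonneg_of_map_nonneg α hα (ℜ a).2 ha))).1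
  have hα_cofinal (b : B) : ∃ a : A, 0 ≤ re (α a + b) := by
    refine ⟨algebraMap ℝ A ‖re b‖, ?_⟩
    rw [show α (algebraMap ℝ A ‖re b‖) = algebraMap ℝ B ‖re b‖ from
      AlgHomClass.commutes (α.restrictScalars ℝ) _, map_add, hre_sa (.algebraMap B (.all _))]
    exact neg_le_iff_add_nonneg'.1 (ℜ b).2.neg_algebraMap_norm_le_self
  obtain ⟨g, hgα, hg⟩ := exists_nonneg_on_cone_comp_eq ((PointedCone.positive ℝ B).comap re)
    (α.toAlgHom.toLinearMap.restrictScalars ℝ) φr hφr_nonneg hα_cofinal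
  obtain ⟨f, hf⟩ := exists_positiveLinearMap_re_eq (g ∘ₗ re)
    (fun b ↦ congrArg g (hre_sa (ℜ b).2))
    (fun b hb ↦ hg (re b) (by simpa [hre_sa hb.isSelfAdjoint] using hb))
  have hfα_re (a : A) : (f (α a)).re = (φ a).re := by
    rw [hf, LinearMap.comp_apply, hre_map]
    exact (hgα _).trans (hφr a)
  exact ⟨f, fun a ↦ Complex.ext (hfα_re a) (by simpa using hfα_re (Complex.I • a))⟩

end Positivity

section Gram

variable {𝕜 X E F : Type*} [RCLike 𝕜] [NormedAddCommGroup E] [InnerProductSpace 𝕜 E]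
  [NormedAddCommGroup F] [InnerProductSpace 𝕜 F] [CompleteSpace F]

theorem exists_linearIsometry_of_inner_eq {e : X → E} {f : X → F}
    (he : Dense (Submodule.span 𝕜 (Set.range e) : Set E))
    (h : ∀ x y, ⟪e x, e y⟫_𝕜 = ⟪f x, f y⟫_𝕜) :
    ∃ J : E →ₗᵢ[𝕜] F, ∀ x, J (e x) = f x := by
  let Φ := Finsupp.linearCombination 𝕜 e
  let Ψ := Finsupp.linearCombination 𝕜 f
  have hinner (b c) : ⟪Φ b, Φ c⟫_𝕜 = ⟪Ψ b, Ψ c⟫_𝕜 := by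
    simp only [Φ, Ψ, Finsupp.linearCombination_apply, Finsupp.sum_inner, Finsupp.inner_sum,
      inner_smul_left, inner_smul_right, h]
  have hnorm (b) : ‖Ψ b‖ = ‖Φ b‖ := by
    rw [norm_eq_sqrt_re_inner (𝕜 := 𝕜), ← hinner, ← norm_eq_sqrt_re_inner]
  have hΦ : DenseRange Φ := by
    rwa [DenseRange, ← LinearMap.coe_range, Finsupp.range_linearCombination]
  let J : E →L[𝕜] F := Ψ.extendOfNorm Φ
  have hJ (b) : J (Φ b) = Ψ b :=
    LinearMap.extendOfNorm_eq hΦ ⟨1, fun b ↦ by rw [hnorm, one_mul]⟩ b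
  have hJnorm (x : E) : ‖J x‖ = ‖x‖ :=
    hΦ.induction_on x (isClosed_eq J.continuous.norm continuous_norm) fun b ↦ by rw [hJ, hnorm]
  exact ⟨⟨J, hJnorm⟩, fun x ↦ by simpa [Φ, Ψ] using hJ (Finsupp.single x 1)⟩

end Gram

section Intertwines

variable {A : Type*} [CStarAlgebra A]
  {H : Type*} [NormedAddCommGroup H] [InnerProductSpace ℂ H] [CompleteSpace H]
  {K : Type*} [NormedAddCommGroup K] [InnerProductSpace ℂ K] [CompleteSpace K]
  {L : Type*} [NormedAddCommGroup L] [InnerProductSpace ℂ L] [CompleteSpace L]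
  {π : A →⋆ₐ[ℂ] (H →L[ℂ] H)} {σ : A →⋆ₐ[ℂ] (K →L[ℂ] K)} {τ : A →⋆ₐ[ℂ] (L →L[ℂ] L)}

/-- The operator `S` intertwines the representations `π` and `σ`. Covariance of `(π, T)` with
respect to `α` says that `T` intertwines `π ∘ α` and `π`. -/
def Intertwines (π : A →⋆ₐ[ℂ] (H →L[ℂ] H)) (σ : A →⋆ₐ[ℂ] (K →L[ℂ] K)) (S : H →L[ℂ] K) : Prop :=
  ∀ a, S ∘L π a = σ a ∘L S

namespace Intertwines

theorem apply {S : H →L[ℂ] K} (hS : Intertwines π σ S) (a : A) (x : H) :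
    S (π a x) = σ a (S x) :=
  DFunLike.congr_fun (hS a) x

theorem comp {R : K →L[ℂ] L} {S : H →L[ℂ] K} (hR : Intertwines σ τ R) (hS : Intertwines π σ S) :
    Intertwines π τ (R ∘L S) := fun a ↦ by
  rw [comp_assoc, hS a, ← comp_assoc, hR a, comp_assoc]

theorem comp_starAlgHom {B : Type*} [CStarAlgebra B] {S : H →L[ℂ] K} (hS : Intertwines π σ S)
    (α : B →⋆ₐ[ℂ] A) : Intertwines (π.comp α) (σ.comp α) S :=
  fun b ↦ hS (α b)

theorem adjoint {S : H →L[ℂ] K} (hS : Intertwines π σ S) :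
    Intertwines σ π (adjoint S) := fun a ↦ by
  have h := congrArg ContinuousLinearMap.adjoint (hS (star a))
  simp only [adjoint_comp, map_star, star_eq_adjoint, adjoint_adjoint] at h
  exact h.symm

end Intertwines

/-- The defect operator `(1 - S* S) ^ (1 / 2)` of a contraction `S`. -/
noncomputable def defectOperator (S : H →L[ℂ] K) : H →L[ℂ] H :=
  CFC.sqrt (1 - adjoint S ∘L S)

theorem norm_sq_add_norm_defectOperator_sq {S : H →L[ℂ] K} (hS : ‖S‖ ≤ 1) (x : H) :
    ‖S x‖ ^ 2 + ‖defectOperator S x‖ ^ 2 = ‖x‖ ^ 2 := by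
  have hnonneg : 0 ≤ 1 - adjoint S ∘L S := by
    rw [sub_nonneg, ← CStarAlgebra.norm_le_one_iff_of_nonneg _
      ((nonneg_iff_isPositive _).2 S.isPositive_adjoint_comp_self), norm_adjoint_comp_self]
    exact mul_le_one₀ hS (norm_nonneg S) hS
  have hsq : defectOperator S * defectOperator S = 1 - adjoint S ∘L S :=
    CFC.sqrt_mul_sqrt_self _ hnonneg
  have hself : adjoint (defectOperator S) = defectOperator S :=
    (IsSelfAdjoint.of_nonneg (CFC.sqrt_nonneg _) : IsSelfAdjoint (defectOperator S))
  have hinner : ⟪S x, S x⟫_ℂ + ⟪defectOperator S x, defectOperator S x⟫_ℂ = ⟪x, x⟫_ℂ := by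
    rw [← adjoint_inner_right, ← adjoint_inner_right (defectOperator S), hself,
      ← mul_apply_eq_comp, hsq, ← inner_add_right]
    simp
  simp only [inner_self_eq_norm_sq_to_K] at hinner
  exact_mod_cast hinner

theorem Intertwines.defectOperator {S : H →L[ℂ] K} (hS : Intertwines π σ S) :
    Intertwines π π (defectOperator S) := fun a ↦ by
  have hcomm : Commute (ContinuousLinearMap.adjoint S ∘L S) (π a) := (hS.adjoint.comp hS) a
  exact (((Commute.one_left _).sub_left hcomm).cfcₙ_nnreal _).eq

end Intertwines

section DirectSum

variable {𝕜 I : Type*} [RCLike 𝕜] {p : ℝ≥0∞} [Fact (1 ≤ p)]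
  {E F : I → Type*} [∀ i, NormedAddCommGroup (E i)] [∀ i, NormedSpace 𝕜 (E i)]
  [∀ i, NormedAddCommGroup (F i)] [∀ i, NormedSpace 𝕜 (F i)]

variable (p) in
/-- The diagonal operator on an `ℓᵖ` direct sum whose entries `S i` are bounded by `C`. -/
noncomputable def lpDiagonal (C : ℝ≥0) (S : ∀ i, E i →L[𝕜] F i) (hS : ∀ i, ‖S i‖₊ ≤ C) :
    lp E p →L[𝕜] lp F p :=
  have hle (x : lp E p) (i : I) : ‖S i (x i)‖ ≤ ‖(((C : ℝ) : 𝕜) • x) i‖ := by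
    rw [lp.coeFn_smul, Pi.smul_apply, norm_smul, RCLike.norm_ofReal, NNReal.abs_eq]
    exact (S i).le_of_opNorm_le (hS i) (x i)
  LinearMap.mkContinuous
    { toFun x := ⟨fun i ↦ S i (x i), (lp.memℓp (((C : ℝ) : 𝕜) • x)).mono' (hle x)⟩
      map_add' _ _ := lp.ext (funext fun i ↦ map_add (S i) _ _)
      map_smul' _ _ := lp.ext (funext fun i ↦ map_smul (S i) _ _) }
    C fun x ↦ (lp.norm_mono (zero_lt_one.trans_le Fact.out).ne' (hle x)).trans_eq (by
      rw [norm_smul, RCLike.norm_ofReal, NNReal.abs_eq])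

@[simp]
theorem lpDiagonal_apply (C : ℝ≥0) (S : ∀ i, E i →L[𝕜] F i) (hS : ∀ i, ‖S i‖₊ ≤ C) (x : lp E p)
    (i : I) : lpDiagonal p C S hS x i = S i (x i) :=
  rfl

variable (𝕜 E p) in
/-- The isometric inclusion of a summand in an `ℓᵖ` direct sum. -/
noncomputable def lpInclusion [DecidableEq I] (i : I) : E i →ₗᵢ[𝕜] lp E p where
  toLinearMap := lp.lsingle p i
  norm_map' := lp.norm_single (zero_lt_one.trans_le Fact.out) i

end DirectSum

section DirectSumRep

variable {I : Type*} {G : I → Type*} [∀ i, NormedAddCommGroup (G i)]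
  [∀ i, InnerProductSpace ℂ (G i)] [∀ i, CompleteSpace (G i)] {A : Type*} [CStarAlgebra A]

/-- The Hilbert space direct sum of a family of representations. -/
noncomputable def directSumRep (σ : ∀ i, A →⋆ₐ[ℂ] (G i →L[ℂ] G i)) :
    A →⋆ₐ[ℂ] (lp G 2 →L[ℂ] lp G 2) where
  toFun a := lpDiagonal 2 ‖a‖₊ (σ · a) fun i ↦ NonUnitalStarAlgHom.nnnorm_apply_le (σ i) a
  map_one' := by ext x i; simp
  map_mul' a b := by ext x i; simp
  map_zero' := by ext x i; simp
  map_add' a b := by ext x i; simp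
  commutes' r := by ext x i; simp [Algebra.algebraMap_eq_smul_one]
  map_star' a := by
    rw [star_eq_adjoint, eq_adjoint_iff]
    intro x y
    simp only [lp.inner_eq_tsum, lpDiagonal_apply, map_star, star_eq_adjoint, adjoint_inner_left]

@[simp]
theorem directSumRep_apply (σ : ∀ i, A →⋆ₐ[ℂ] (G i →L[ℂ] G i)) (a : A) (x : lp G 2) (i : I) :
    directSumRep σ a x i = σ i a (x i) :=
  rfl

theorem directSumRep_single [DecidableEq I] (σ : ∀ i, A →⋆ₐ[ℂ] (G i →L[ℂ] G i)) (a : A) (i : I)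
    (x : G i) : directSumRep σ a (lp.single 2 i x) = lp.single 2 i (σ i a x) := by
  ext j
  rw [directSumRep_apply]
  by_cases hj : j = i
  · subst hj
    rw [lp.single_apply_self, lp.single_apply_self]
  · rw [lp.single_apply_ne _ _ _ hj, lp.single_apply_ne _ _ _ hj, map_zero]

theorem intertwines_lpInclusion [DecidableEq I] (σ : ∀ i, A →⋆ₐ[ℂ] (G i →L[ℂ] G i)) (i : I) :
    Intertwines (σ i) (directSumRep σ) (lpInclusion ℂ 2 G i).toContinuousLinearMap := fun a ↦
  ContinuousLinearMap.ext fun x ↦ (directSumRep_single σ a i x).symm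

end DirectSumRep

section CyclicFamily

variable {A : Type*} [CStarAlgebra A]
  {L : Type*} [NormedAddCommGroup L] [InnerProductSpace ℂ L] [CompleteSpace L]

theorem inner_map_apply_map_apply (σ : A →⋆ₐ[ℂ] (L →L[ℂ] L)) (a b : A) (x y : L) :
    ⟪σ a x, σ b y⟫_ℂ = ⟪x, σ (star a * b) y⟫_ℂ := by
  rw [map_mul, map_star, star_eq_adjoint, mul_apply_eq_comp, adjoint_inner_right]

-- The isometry is determined by `σ a (ξ i) ↦ τ a (η i)`, as in the uniqueness of GNS.
theorem exists_intertwining_isometry_of_inner_eq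
    {K : Type*} [NormedAddCommGroup K] [InnerProductSpace ℂ K] [CompleteSpace K] {I : Type*}
    {σ : A →⋆ₐ[ℂ] (L →L[ℂ] L)} {τ : A →⋆ₐ[ℂ] (K →L[ℂ] K)} {ξ : I → L} {η : I → K}
    (hξ : Dense (Submodule.span ℂ (Set.range fun p : I × A ↦ σ p.2 (ξ p.1)) : Set L))
    (h : ∀ i j a, ⟪ξ i, σ a (ξ j)⟫_ℂ = ⟪η i, τ a (η j)⟫_ℂ) :
    ∃ J : L →ₗᵢ[ℂ] K, Intertwines σ τ J.toContinuousLinearMap := by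
  obtain ⟨J, hJ⟩ := exists_linearIsometry_of_inner_eq (f := fun p : I × A ↦ τ p.2 (η p.1)) hξ
    fun p q ↦ by rw [inner_map_apply_map_apply, inner_map_apply_map_apply, h]
  refine ⟨J, fun a ↦ ext_on hξ ?_⟩
  rintro _ ⟨⟨i, b⟩, rfl⟩
  calc J (σ a (σ b (ξ i))) = J (σ (a * b) (ξ i)) := by rw [map_mul, mul_apply_eq_comp]
    _ = τ (a * b) (η i) := hJ (i, a * b)
    _ = τ a (τ b (η i)) := by rw [map_mul, mul_apply_eq_comp]
    _ = τ a (J (σ b (ξ i))) := by rw [hJ (i, b)]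

/-- The vector functional `a ↦ ⟪x, σ a x⟫` of a representation `σ`. -/
noncomputable def vectorFunctional [PartialOrder A] [StarOrderedRing A]
    (σ : A →⋆ₐ[ℂ] (L →L[ℂ] L)) (x : L) : A →ₚ[ℂ] ℂ :=
  .mk₀ (innerₛₗ ℂ x ∘ₗ (ContinuousLinearMap.apply ℂ L x).toLinearMap ∘ₗ σ.toAlgHom.toLinearMap)
    fun a ha ↦ by
      obtain ⟨b, rfl⟩ := CStarAlgebra.nonneg_iff_eq_star_mul_self.1 ha
      change 0 ≤ ⟪x, σ (star b * b) x⟫_ℂ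
      rw [← inner_map_apply_map_apply, inner_self_eq_norm_sq_to_K]
      exact pow_nonneg (Complex.zero_le_real.2 (norm_nonneg (σ b x))) 2

@[simp]
theorem vectorFunctional_apply [PartialOrder A] [StarOrderedRing A]
    (σ : A →⋆ₐ[ℂ] (L →L[ℂ] L)) (x : L) (a : A) :
    vectorFunctional σ x a = ⟪x, σ a x⟫_ℂ :=
  rfl

theorem exists_orthogonal_cyclic_family (σ : A →⋆ₐ[ℂ] (L →L[ℂ] L)) :
    ∃ S : Set L, S.Pairwise (fun x y ↦ ∀ a, ⟪x, σ a y⟫_ℂ = 0) ∧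
      Dense (Submodule.span ℂ (Set.range fun p : S × A ↦ σ p.2 p.1) : Set L) := by
  obtain ⟨S, hS⟩ := zorn_subset {S : Set L | S.Pairwise (fun x y ↦ ∀ a, ⟪x, σ a y⟫_ℂ = 0)}
    fun c hc hchain ↦ ⟨⋃₀ c, (Set.pairwise_sUnion hchain.directedOn).2 hc,
      fun _ ↦ Set.subset_sUnion_of_mem⟩
  refine ⟨S, hS.prop, ?_⟩
  rw [Submodule.dense_iff_topologicalClosure_eq_top, Submodule.topologicalClosure_eq_top_iff,
    Submodule.eq_bot_iff]
  intro y hy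
  have hσy (x) (hx : x ∈ S) (a : A) : ⟪σ a x, y⟫_ℂ = 0 :=
    hy _ (Submodule.subset_span ⟨(⟨x, hx⟩, a), rfl⟩)
  have hinsert : (insert y S).Pairwise fun x y ↦ ∀ a, ⟪x, σ a y⟫_ℂ = 0 :=
    hS.prop.insert fun x hx _ ↦ ⟨fun a ↦ inner_eq_zero_symm.1 (hσy x hx a), fun a ↦ by
      have := hσy x hx (star a)
      rwa [map_star, star_eq_adjoint, adjoint_inner_left] at this⟩
  have hyS : y ∈ S := hS.le_of_ge hinsert (Set.subset_insert y S) (Set.mem_insert y S)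
  simpa using hσy y hyS 1

end CyclicFamily

/-- A representation of `A` on a Hilbert space, bundled with the space so that sequences of
representations on varying spaces can be built by recursion. -/
structure HilbertRep (A : Type u) [CStarAlgebra A] where
  space : Type w
  [normedAddCommGroup : NormedAddCommGroup space]
  [innerProductSpace : InnerProductSpace ℂ space]
  [completeSpace : CompleteSpace space]
  hom : A →⋆ₐ[ℂ] (space →L[ℂ] space)

namespace HilbertRep

attribute [instance] normedAddCommGroup innerProductSpace completeSpace

theorem exists_inner_hom_apply_eq {A : Type u} [CStarAlgebra A] [PartialOrder A]
    [StarOrderedRing A] (f : A →ₚ[ℂ] ℂ) :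
    ∃ (R : HilbertRep.{u, u} A) (ξ : R.space), ∀ a, ⟪ξ, R.hom a ξ⟫_ℂ = f a := by
  refine ⟨⟨f.GNS, f.gnsStarAlgHom⟩, (f.toPreGNS 1 : f.PreGNS), fun a ↦ ?_⟩
  calc ⟪((f.toPreGNS 1 : f.PreGNS) : f.GNS), f.gnsStarAlgHom a (f.toPreGNS 1 : f.PreGNS)⟫_ℂ
      = ⟪((f.toPreGNS 1 : f.PreGNS) : f.GNS), (f.toPreGNS (a * 1) : f.PreGNS)⟫_ℂ :=
        congrArg _ f.gnsNonUnitalStarAlgHom_apply_coe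
    _ = f (star 1 * (a * 1)) := UniformSpace.Completion.inner_coe _ _
    _ = f a := by rw [star_one, one_mul, mul_one]

theorem exists_extension {A : Type u} {B : Type v} [CStarAlgebra A] [CStarAlgebra B]
    (α : A →⋆ₐ[ℂ] B) (hα : Function.Injective α) (R : HilbertRep.{u, w} A) :
    ∃ (R' : HilbertRep.{v, max v w} B) (J : R.space →ₗᵢ[ℂ] R'.space),
      Intertwines R.hom (R'.hom.comp α) J.toContinuousLinearMap := by
  classical
  let _ := CStarAlgebra.spectralOrder A
  have _ := CStarAlgebra.spectralOrderedRing A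
  let _ := CStarAlgebra.spectralOrder B
  have _ := CStarAlgebra.spectralOrderedRing B
  obtain ⟨S, horth, hdense⟩ := exists_orthogonal_cyclic_family R.hom
  choose f hf using fun x : S ↦ exists_positiveLinearMap_extension α hα (vectorFunctional R.hom x)
  choose Q ξ hξ using fun x : S ↦ exists_inner_hom_apply_eq (f x)
  let R' : HilbertRep.{v, max v w} B :=
    ⟨lp (fun x ↦ (Q x).space) 2, directSumRep fun x ↦ (Q x).hom⟩
  let η (x : S) : R'.space := lp.single 2 x (ξ x)
  have hinner (x y : S) (a : A) : ⟪(x : R.space), R.hom a y⟫_ℂ = ⟪η x, R'.hom (α a) (η y)⟫_ℂ := by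
    rw [directSumRep_single, lp.inner_single_left]
    by_cases hxy : x = y
    · subst hxy
      rw [lp.single_apply_self, hξ, hf, vectorFunctional_apply]
    · rw [lp.single_apply_ne _ _ _ hxy, inner_zero_right]
      exact horth x.2 y.2 (Subtype.coe_ne_coe.2 hxy) a
  have hJ := exists_intertwining_isometry_of_inner_eq (τ := R'.hom.comp α) (η := η) hdense hinner
  exact ⟨R', hJ⟩

end HilbertRep

section Shift

variable {𝕜 : Type*} [RCLike 𝕜] {G : ℕ → Type*} [∀ n, NormedAddCommGroup (G n)]
  [∀ n, InnerProductSpace 𝕜 (G n)]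

theorem orthogonalFamily_shift (E : ∀ n, G n →ₗᵢ[𝕜] G (n + 1)) :
    OrthogonalFamily 𝕜 G fun n ↦ (lpInclusion 𝕜 2 G (n + 1)).comp (E n) := fun m n hmn x y ↦ by
  change ⟪lp.single 2 (m + 1) (E m x), lp.single 2 (n + 1) (E n y)⟫_𝕜 = 0
  rw [lp.inner_single_left, lp.single_apply_ne _ _ _ (by omega), inner_zero_right]

variable [∀ n, CompleteSpace (G n)]

/-- The weighted shift on `⨁ G n` whose weights are the isometries `E n : G n → G (n + 1)`. -/
noncomputable def isometricShift (E : ∀ n, G n →ₗᵢ[𝕜] G (n + 1)) : lp G 2 →ₗᵢ[𝕜] lp G 2 :=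
  (orthogonalFamily_shift E).linearIsometry

@[simp]
theorem isometricShift_single (E : ∀ n, G n →ₗᵢ[𝕜] G (n + 1)) (n : ℕ) (x : G n) :
    isometricShift E (lp.single 2 n x) = lp.single 2 (n + 1) (E n x) :=
  (orthogonalFamily_shift E).linearIsometry_apply_single x

theorem inner_single_zero_isometricShift (E : ∀ n, G n →ₗᵢ[𝕜] G (n + 1)) (x : G 0) (y : lp G 2) :
    ⟪lp.single 2 0 x, isometricShift E y⟫_𝕜 = 0 := by
  have h : innerSL 𝕜 (lp.single 2 0 x) ∘L (isometricShift E).toContinuousLinearMap = 0 := by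
    refine lp.ext_continuousLinearMap ENNReal.ofNat_ne_top fun n ↦
      ContinuousLinearMap.ext fun z ↦ ?_
    change ⟪lp.single 2 0 x, isometricShift E (lp.single 2 n z)⟫_𝕜 = 0
    rw [isometricShift_single, lp.inner_single_left, lp.single_apply_ne _ _ _ n.succ_ne_zero.symm,
      inner_zero_right]
  exact DFunLike.congr_fun h y

end Shift

theorem intertwines_isometricShift {A : Type*} [CStarAlgebra A] {G : ℕ → Type*}
    [∀ n, NormedAddCommGroup (G n)] [∀ n, InnerProductSpace ℂ (G n)] [∀ n, CompleteSpace (G n)]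
    {σ τ : ∀ n, A →⋆ₐ[ℂ] (G n →L[ℂ] G n)} {E : ∀ n, G n →ₗᵢ[ℂ] G (n + 1)}
    (hE : ∀ n, Intertwines (σ n) (τ (n + 1)) (E n).toContinuousLinearMap) :
    Intertwines (directSumRep σ) (directSumRep τ)
      (isometricShift E).toContinuousLinearMap := fun a ↦ by
  refine lp.ext_continuousLinearMap ENNReal.ofNat_ne_top fun n ↦ ContinuousLinearMap.ext fun x ↦ ?_
  change isometricShift E (directSumRep σ a (lp.single 2 n x)) =
    directSumRep τ a (isometricShift E (lp.single 2 n x))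
  rw [directSumRep_single, isometricShift_single, isometricShift_single, directSumRep_single]
  exact congrArg (lp.single 2 (n + 1)) ((hE n).apply a x)

theorem exists_intertwining_shift {A : Type u} [CStarAlgebra A] (α : A →⋆ₐ[ℂ] A)
    (hα : Function.Injective α) {H : Type v} [NormedAddCommGroup H] [InnerProductSpace ℂ H]
    [CompleteSpace H] (π : A →⋆ₐ[ℂ] (H →L[ℂ] H)) :
    ∃ (R : HilbertRep.{u, max u v} A) (J : H →ₗᵢ[ℂ] R.space) (W : R.space →ₗᵢ[ℂ] R.space),
      Intertwines π (R.hom.comp α) J.toContinuousLinearMap ∧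
      Intertwines R.hom (R.hom.comp α) W.toContinuousLinearMap ∧
      ∀ x y, ⟪J x, W y⟫_ℂ = 0 := by
  obtain ⟨R₀, J, hJ⟩ := HilbertRep.exists_extension.{u, u, v} α hα ⟨H, π⟩
  choose next E hE using HilbertRep.exists_extension.{u, u, max u v} α hα
  let R : ℕ → HilbertRep.{u, max u v} A :=
    Nat.rec (motive := fun _ ↦ HilbertRep.{u, max u v} A) R₀ fun _ ↦ next
  let E' (n : ℕ) : (R n).space →ₗᵢ[ℂ] (R (n + 1)).space := E (R n)
  exact ⟨⟨lp (fun n ↦ (R n).space) 2, directSumRep fun n ↦ (R n).hom⟩,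
    (lpInclusion ℂ 2 (fun n ↦ (R n).space) 0).comp J, isometricShift E',
    ((intertwines_lpInclusion (fun n ↦ (R n).hom) 0).comp_starAlgHom α).comp hJ,
    intertwines_isometricShift (τ := fun n ↦ (R n).hom.comp α) (E := E') fun n ↦ hE (R n),
    fun x y ↦ inner_single_zero_isometricShift E' (J x) y⟩

section Prod

variable {A : Type*} [CStarAlgebra A]
  {H : Type*} [NormedAddCommGroup H] [InnerProductSpace ℂ H] [CompleteSpace H]
  {L : Type*} [NormedAddCommGroup L] [InnerProductSpace ℂ L] [CompleteSpace L]

/-- The direct sum of two representations. -/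
noncomputable def prodRep (π : A →⋆ₐ[ℂ] (H →L[ℂ] H)) (σ : A →⋆ₐ[ℂ] (L →L[ℂ] L)) :
    A →⋆ₐ[ℂ] (WithLp 2 (H × L) →L[ℂ] WithLp 2 (H × L)) where
  toFun a := (WithLp.prodContinuousLinearEquiv 2 ℂ H L).symm ∘L
    (π a ∘L WithLp.fstL 2 ℂ H L).prod (σ a ∘L WithLp.sndL 2 ℂ H L)
  map_one' := by ext x; refine WithLp.ofLp_injective 2 (Prod.ext ?_ ?_) <;> simp
  map_mul' a b := by ext x; refine WithLp.ofLp_injective 2 (Prod.ext ?_ ?_) <;> simp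
  map_zero' := by ext x; refine WithLp.ofLp_injective 2 (Prod.ext ?_ ?_) <;> simp
  map_add' a b := by ext x; refine WithLp.ofLp_injective 2 (Prod.ext ?_ ?_) <;> simp
  commutes' r := by
    ext x
    refine WithLp.ofLp_injective 2 (Prod.ext ?_ ?_) <;> simp [Algebra.algebraMap_eq_smul_one]
  map_star' a := by
    rw [star_eq_adjoint, eq_adjoint_iff]
    intro x y
    simp [map_star, star_eq_adjoint, adjoint_inner_left]

@[simp]
theorem prodRep_apply (π : A →⋆ₐ[ℂ] (H →L[ℂ] H)) (σ : A →⋆ₐ[ℂ] (L →L[ℂ] L)) (a : A)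
    (x : WithLp 2 (H × L)) : prodRep π σ a x = WithLp.toLp 2 (π a x.fst, σ a x.snd) :=
  rfl

theorem prodRep_comp {B : Type*} [CStarAlgebra B] (π : A →⋆ₐ[ℂ] (H →L[ℂ] H))
    (σ : A →⋆ₐ[ℂ] (L →L[ℂ] L)) (α : B →⋆ₐ[ℂ] A) :
    (prodRep π σ).comp α = prodRep (π.comp α) (σ.comp α) :=
  rfl

end Prod

section BlockIsometry

variable {𝕜 H L : Type*} [RCLike 𝕜] [NormedAddCommGroup H] [InnerProductSpace 𝕜 H]
  [NormedAddCommGroup L] [InnerProductSpace 𝕜 L]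

variable (𝕜 H L) in
/-- The inclusion of the first summand in the Hilbert space direct sum `H ⊕ L`. -/
noncomputable def prodInl : H →ₗᵢ[𝕜] WithLp 2 (H × L) where
  toLinearMap := (WithLp.linearEquiv 2 𝕜 (H × L)).symm.toLinearMap ∘ₗ LinearMap.inl 𝕜 H L
  norm_map' := WithLp.norm_toLp_fst 2 H L

@[simp]
theorem prodInl_apply (x : H) : prodInl 𝕜 H L x = WithLp.toLp 2 (x, 0) :=
  rfl

/-- The isometry of `H ⊕ L` with operator matrix `!![S, 0; D, W]`, for `W` an isometry and
`(S, D)` an isometric column with the range of `D` orthogonal to that of `W`. -/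
noncomputable def blockIsometry (S : H →L[𝕜] H) (D : H →L[𝕜] L) (W : L →ₗᵢ[𝕜] L)
    (hSD : ∀ x, ‖S x‖ ^ 2 + ‖D x‖ ^ 2 = ‖x‖ ^ 2) (hDW : ∀ x y, ⟪D x, W y⟫_𝕜 = 0) :
    WithLp 2 (H × L) →ₗᵢ[𝕜] WithLp 2 (H × L) where
  toLinearMap := (WithLp.linearEquiv 2 𝕜 (H × L)).symm.toLinearMap ∘ₗ
    (S.toLinearMap ∘ₗ LinearMap.fst 𝕜 H L).prod (D.toLinearMap.coprod W.toLinearMap) ∘ₗ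
      (WithLp.linearEquiv 2 𝕜 (H × L)).toLinearMap
  norm_map' x := by
    have hpyth : ‖D x.fst + W x.snd‖ ^ 2 = ‖D x.fst‖ ^ 2 + ‖x.snd‖ ^ 2 := by
      simpa only [pow_two, W.norm_map] using
        norm_add_sq_eq_norm_sq_add_norm_sq_of_inner_eq_zero _ _ (hDW x.fst x.snd)
    rw [← sq_eq_sq₀ (norm_nonneg _) (norm_nonneg _), WithLp.prod_norm_sq_eq_of_L2,
      WithLp.prod_norm_sq_eq_of_L2 x, ← hSD x.fst, add_assoc, ← hpyth]
    rfl

variable {S : H →L[𝕜] H} {D : H →L[𝕜] L} {W : L →ₗᵢ[𝕜] L}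
  (hSD : ∀ x, ‖S x‖ ^ 2 + ‖D x‖ ^ 2 = ‖x‖ ^ 2) (hDW : ∀ x y, ⟪D x, W y⟫_𝕜 = 0)

@[simp]
theorem blockIsometry_apply (x : WithLp 2 (H × L)) :
    blockIsometry S D W hSD hDW x = WithLp.toLp 2 (S x.fst, D x.fst + W x.snd) := by
  simp [blockIsometry]

variable [CompleteSpace H] [CompleteSpace L]

theorem adjoint_blockIsometry_comp_prodInl :
    adjoint (blockIsometry S D W hSD hDW).toContinuousLinearMap ∘L
        (prodInl 𝕜 H L).toContinuousLinearMap =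
      (prodInl 𝕜 H L).toContinuousLinearMap ∘L adjoint S := by
  refine ContinuousLinearMap.ext fun x ↦ ext_inner_right 𝕜 fun y ↦ ?_
  simp [adjoint_inner_left]

end BlockIsometry

theorem intertwines_blockIsometry {A : Type*} [CStarAlgebra A] {H L : Type*}
    [NormedAddCommGroup H] [InnerProductSpace ℂ H] [CompleteSpace H]
    [NormedAddCommGroup L] [InnerProductSpace ℂ L] [CompleteSpace L]
    {π π' : A →⋆ₐ[ℂ] (H →L[ℂ] H)} {σ σ' : A →⋆ₐ[ℂ] (L →L[ℂ] L)}
    {S : H →L[ℂ] H} {D : H →L[ℂ] L} {W : L →ₗᵢ[ℂ] L}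
    (hSD : ∀ x, ‖S x‖ ^ 2 + ‖D x‖ ^ 2 = ‖x‖ ^ 2) (hDW : ∀ x y, ⟪D x, W y⟫_ℂ = 0)
    (hS : Intertwines π π' S) (hD : Intertwines π σ' D)
    (hW : Intertwines σ σ' W.toContinuousLinearMap) :
    Intertwines (prodRep π σ) (prodRep π' σ')
      (blockIsometry S D W hSD hDW).toContinuousLinearMap := fun a ↦ by
  refine ContinuousLinearMap.ext fun x ↦ WithLp.ofLp_injective 2 (Prod.ext ?_ ?_)
  · simpa using hS.apply a x.fst
  · simpa using congrArg₂ (· + ·) (hD.apply a x.fst) (hW.apply a x.snd)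

/-- **Theorem 1, coisometric extension.** Every contractive covariant
representation `(π, T)` of `(A, α)` on `H` extends to a coisometric covariant representation
`(ρ, V)` on a Hilbert space `K ⊇ H`: there is an isometric embedding `ι : H → K` with
`ρ(a)` leaving (the image of) `H` invariant and restricting there to `π(a)`, `V` leaving `H`
invariant and restricting there to `T`, `V ρ(α a) = ρ(a) V` for all `a ∈ A`, and `V V* = I`. -/
theorem exists_coisometric_extension
    {A : Type u} [CStarAlgebra A]
    {H : Type v} [NormedAddCommGroup H] [InnerProductSpace ℂ H] [CompleteSpace H]
    (α : A →⋆ₐ[ℂ] A) (hα : Function.Injective α) (hαone : α 1 = 1)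
    (π : A →⋆ₐ[ℂ] (H →L[ℂ] H))
    (T : H →L[ℂ] H) (hT : ‖T‖ ≤ 1)
    (hcov : ∀ a : A, T ∘L π (α a) = π a ∘L T) :
    ∃ (K : Type (max u v)) (_ : NormedAddCommGroup K) (_ : InnerProductSpace ℂ K)
      (_ : CompleteSpace K) (ρ : A →⋆ₐ[ℂ] (K →L[ℂ] K)) (V : K →L[ℂ] K) (ι : H →L[ℂ] K),
      adjoint ι ∘L ι = 1 ∧
      (∀ a : A, ρ a ∘L ι = ι ∘L π a) ∧
      V ∘L ι = ι ∘L T ∧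
      (∀ a : A, V ∘L ρ (α a) = ρ a ∘L V) ∧
      V ∘L adjoint V = 1 := by
  obtain ⟨R, J, W, hJ, hW, horth⟩ := exists_intertwining_shift α hα π
  have hπT : Intertwines (π.comp α) π T := hcov
  have hT_adj_le : ‖adjoint T‖ ≤ 1 := (adjoint.norm_map T).trans_le hT
  let D : H →L[ℂ] R.space := J.toContinuousLinearMap ∘L defectOperator (adjoint T)
  have hD : Intertwines π (R.hom.comp α) D := hJ.comp hπT.adjoint.defectOperator
  have hSD (x : H) : ‖adjoint T x‖ ^ 2 + ‖D x‖ ^ 2 = ‖x‖ ^ 2 := by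
    simpa [D] using norm_sq_add_norm_defectOperator_sq hT_adj_le x
  let C := blockIsometry (adjoint T) D W hSD fun x ↦ horth (defectOperator (adjoint T) x)
  have hC : Intertwines (prodRep π R.hom) ((prodRep π R.hom).comp α) C.toContinuousLinearMap :=
    prodRep_comp π R.hom α ▸ intertwines_blockIsometry hSD _ hπT.adjoint hD hW
  refine ⟨WithLp 2 (H × R.space), inferInstance, inferInstance, inferInstance, prodRep π R.hom,
    adjoint C.toContinuousLinearMap, (prodInl ℂ H R.space).toContinuousLinearMap,
    (prodInl ℂ H R.space).adjoint_comp_self, fun a ↦ ?_, ?_, hC.adjoint, ?_⟩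
  · ext x
    simp
  · exact (adjoint_blockIsometry_comp_prodInl hSD _).trans (by rw [adjoint_adjoint])
  · rw [adjoint_adjoint]
    exact C.adjoint_comp_self
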